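/- Let K be a field of characteristic zero, α, β ∈ K with β ≠ 0, and suppose the roots λ, μ of t² − αt − β lie in K. Then the down-up algebra A = A(α,β,0) has a non-trivial stably free right ideal, i.e. a right ideal that is stably free but not free as a right A-module. -/

import Mathlib

noncomputable section

/-- Defining relations of the down-up algebra `A(α,β,γ)`:
`D = ι 0`, `U = ι 1`, relations `DU² = αUDU + βU²D + γU` and `D²U = αDUD + βUD² + γD`. -/
inductive DownUpRel (K : Type) [Field K] (a b g : K) :
    FreeAlgebra K (Fin 2) → FreeAlgebra K (Fin 2) → Prop
  | rel1 : DownUpRel K a b g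
      (FreeAlgebra.ι K (0 : Fin 2) * FreeAlgebra.ι K (1 : Fin 2) * FreeAlgebra.ι K (1 : Fin 2))
      (a • (FreeAlgebra.ι K (1 : Fin 2) * FreeAlgebra.ι K (0 : Fin 2) * FreeAlgebra.ι K (1 : Fin 2)) +
       b • (FreeAlgebra.ι K (1 : Fin 2) * FreeAlgebra.ι K (1 : Fin 2) * FreeAlgebra.ι K (0 : Fin 2)) +
       g • FreeAlgebra.ι K (1 : Fin 2))
  | rel2 : DownUpRel K a b g
      (FreeAlgebra.ι K (0 : Fin 2) * FreeAlgebra.ι K (0 : Fin 2) * FreeAlgebra.ι K (1 : Fin 2))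
      (a • (FreeAlgebra.ι K (0 : Fin 2) * FreeAlgebra.ι K (1 : Fin 2) * FreeAlgebra.ι K (0 : Fin 2)) +
       b • (FreeAlgebra.ι K (1 : Fin 2) * FreeAlgebra.ι K (0 : Fin 2) * FreeAlgebra.ι K (0 : Fin 2)) +
       g • FreeAlgebra.ι K (0 : Fin 2))

/-- The down-up algebra `A(α,β,γ)`. -/
abbrev DownUp (K : Type) [Field K] (a b g : K) := RingQuot (DownUpRel K a b g)

/-- The generator `D` of `A(α,β,γ)`. -/
def DownUp.D (K : Type) [Field K] (a b g : K) : DownUp K a b g :=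
  RingQuot.mkAlgHom K (DownUpRel K a b g) (FreeAlgebra.ι K (0 : Fin 2))

/-- The generator `U` of `A(α,β,γ)`. -/
def DownUp.U (K : Type) [Field K] (a b g : K) : DownUp K a b g :=
  RingQuot.mkAlgHom K (DownUpRel K a b g) (FreeAlgebra.ι K (1 : Fin 2))

/-- A right `A`-module `P` (realized as a left `Aᵐᵒᵖ`-module) is stably free if
`P ⊕ Aⁿ ≅ Aᵐ` as right `A`-modules for some naturals `n m`. -/
def IsStablyFreeRight (A : Type) [Ring A] (P : Type) [AddCommGroup P] [Module Aᵐᵒᵖ P] : Prop :=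
  ∃ n m : ℕ, Nonempty ((P × (Fin n → A)) ≃ₗ[Aᵐᵒᵖ] (Fin m → A))

/-!
Put `X₀ = UD` and `X₁ = DU`. These commute, and `D * f = σ f * D` for an automorphism `σ` of
`K[X₀, X₁]`. Take a nonunit `f` comaximal with `σ f`: an eigenvalue `λ ≠ 1` of `σ` on linear forms
gives `f = 1 + ω` with `σ ω = λ ω`, and if `λ = μ = 1` then `f = 1 + (X₁ - X₀) * X₀` works. The row
`(1 + D, σ f)` is unimodular, and `1 + D` is left regular because `D` has positive degree for a
grading of `A`, so the right ideal `I = {z | σ f * z ∈ (1 + D) * A}` satisfies `I ⊕ A ≅ A²`.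

If `I` were free, it would be generated by one `g`, with `σ f * g = (1 + D) * y`, and `(y, g)` would
generate all syzygies of the row. Since `σ f * (f + D * σ f) = (1 + D) * f * σ f`, the element `y`
left-divides `f * σ f`, so in the skew Laurent ring `K[X₀, X₁][t^{±1}; σ]`, where `D` becomes `t`,
it is a monomial `c * t ^ k`. Comparing coefficients in `σ f * g = (1 + D) * y` shows `f ∣ c`. If
`p * f + q * σ f = 1`, then `1 - p * f * (1 + D)` also belongs to a syzygy, whence `c ∣ 1 - p * f`.
Thus `f` divides `1`.
-/

section Modules

open LinearMap

universe v

variable {R M M' N : Type*} [Ring R] [AddCommGroup M] [AddCommGroup M'] [AddCommGroup N]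
  [Module R M] [Module R M'] [Module R N]

theorem nonempty_ker_coprod_equiv_comap_range {f : M →ₗ[R] N} (hf : Function.Injective f)
    (g : M' →ₗ[R] N) : Nonempty (ker (f.coprod g) ≃ₗ[R] (range f).comap g) := by
  have mem_comap (x : ker (f.coprod g)) : x.1.2 ∈ (range f).comap g :=
    ⟨-x.1.1, by rw [map_neg, neg_eq_iff_add_eq_zero]; exact x.2⟩
  refine ⟨.ofBijective ((LinearMap.snd R M M' ∘ₗ Submodule.subtype _).codRestrict _ mem_comap)
    ⟨?_, ?_⟩⟩
  · rintro ⟨⟨x, y⟩, hxy⟩ ⟨⟨x', y'⟩, hxy'⟩ h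
    obtain rfl : y = y' := congrArg Subtype.val h
    obtain rfl : x = x' := hf (add_right_cancel (hxy.trans hxy'.symm))
    rfl
  · rintro ⟨y, x, hx⟩
    exact ⟨⟨(-x, y), by simp [hx]⟩, rfl⟩

theorem nonempty_comap_range_prod_equiv {f : M →ₗ[R] N} (hf : Function.Injective f)
    {g : M' →ₗ[R] N} {s : N →ₗ[R] M × M'} (hs : f.coprod g ∘ₗ s = .id) :
    Nonempty ((((range f).comap g) × N) ≃ₗ[R] M × M') := by
  obtain ⟨e⟩ := nonempty_ker_coprod_equiv_comap_range hf g
  have split := (f.coprod g).exact_subtype_ker_map.splitSurjectiveEquiv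
    (Submodule.injective_subtype _) ⟨s, hs⟩
  exact ⟨(e.symm.prodCongr (.refl R N)).trans split.1.symm⟩

theorem nonempty_linearEquiv_of_prod_linearEquiv_prod {R : Type*} {M N P : Type v} [Ring R]
    [InvariantBasisNumber R] [AddCommGroup M] [AddCommGroup N] [AddCommGroup P] [Module R M]
    [Module R N] [Module R P] [Module.Free R M] [Module.Free R N] [Module.Free R P]
    [Module.Finite R N] (e : (M × N) ≃ₗ[R] P × N) :
    Nonempty (M ≃ₗ[R] P) := by
  have := nontrivial_of_invariantBasisNumber R
  let bM := Module.Free.chooseBasis R M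
  let bN := Module.Free.chooseBasis R N
  let bP := Module.Free.chooseBasis R P
  have := Module.Finite.finite_basis bN
  have card_eq := Cardinal.mk_congr (((bM.prod bN).map e).indexEquiv (bP.prod bN))
  simp only [Cardinal.mk_sum, Cardinal.lift_id] at card_eq
  obtain ⟨i⟩ := Cardinal.eq.1 (Cardinal.eq_of_add_eq_add_right card_eq Cardinal.mk_lt_aleph0)
  exact ⟨bM.equiv bP i⟩

end Modules

section colonIdeal

open LinearMap

variable {A : Type*} [Ring A]

/-- The right ideal `{z | b * z ∈ a * A}`, as a submodule over `Aᵐᵒᵖ`; for a unimodular row `(a, b)`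
with `a` left regular it is isomorphic to the syzygy module of the row. -/
def colonIdeal (a b : A) : Submodule Aᵐᵒᵖ A :=
  (range (mulLeft Aᵐᵒᵖ a)).comap (mulLeft Aᵐᵒᵖ b)

theorem free_mulOpposite_self : Module.Free Aᵐᵒᵖ A :=
  .of_equiv (MulOpposite.opLinearEquiv Aᵐᵒᵖ).symm

theorem finite_mulOpposite_self : Module.Finite Aᵐᵒᵖ A :=
  .equiv (MulOpposite.opLinearEquiv Aᵐᵒᵖ).symm

variable {a b p q : A}

theorem nonempty_colonIdeal_prod_equiv (ha : IsLeftRegular a) (h : a * p + b * q = 1) :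
    Nonempty ((colonIdeal a b × A) ≃ₗ[Aᵐᵒᵖ] A × A) :=
  nonempty_comap_range_prod_equiv (s := (mulLeft Aᵐᵒᵖ p).prod (mulLeft Aᵐᵒᵖ q)) ha <| by
    ext
    simpa using h

theorem exists_generator_of_free_colonIdeal [InvariantBasisNumber A] (ha : IsLeftRegular a)
    (h : a * p + b * q = 1) [Module.Free Aᵐᵒᵖ (colonIdeal a b)] :
    ∃ g y, b * g = a * y ∧ ∀ z w, b * z = a * w → ∃ x, z = g * x ∧ w = y * x := by
  have := free_mulOpposite_self (A := A)
  have := finite_mulOpposite_self (A := A)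
  obtain ⟨e⟩ := nonempty_colonIdeal_prod_equiv ha h
  obtain ⟨e⟩ := nonempty_linearEquiv_of_prod_linearEquiv_prod e
  obtain ⟨y, hy : a * y = b * (e.symm 1 : A)⟩ := (e.symm 1).2
  refine ⟨e.symm 1, y, hy.symm, fun z w hzw => ?_⟩
  obtain ⟨x, hx⟩ := e.symm.surjective ⟨z, w, hzw.symm⟩
  have hz : z = (e.symm 1 : A) * x := by
    have := congrArg Subtype.val (e.symm.map_smul (.op x) 1)
    rwa [op_smul_eq_mul, one_mul, hx] at this
  refine ⟨x, hz, ha ?_⟩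
  calc a * w = b * z := hzw.symm
    _ = a * (y * x) := by rw [hz, ← mul_assoc, ← mul_assoc, ← hy]

end colonIdeal

theorem isStablyFreeRight_colonIdeal {A : Type} [Ring A] {a b p q : A}
    (ha : IsLeftRegular a) (h : a * p + b * q = 1) : IsStablyFreeRight A (colonIdeal a b) := by
  obtain ⟨e⟩ := nonempty_colonIdeal_prod_equiv ha h
  exact ⟨1, 2, ⟨((LinearEquiv.refl _ _).prodCongr (LinearEquiv.funUnique (Fin 1) Aᵐᵒᵖ A)).trans
    (e.trans (LinearEquiv.finTwoArrow Aᵐᵒᵖ A).symm)⟩⟩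

theorem invariantBasisNumber_of_ringHom {A B : Type*} [Semiring A] [Semiring B]
    [InvariantBasisNumber B] (f : A →+* B) : InvariantBasisNumber A := by
  refine invariantBasisNumber_iff_matrix.2 fun n m M N hMN hNM => ?_
  refine invariantBasisNumber_iff_matrix.1 ‹_› n m (M.map f) (N.map f) ?_ ?_
  · rw [← Matrix.map_mul, hMN, Matrix.map_one f f.map_zero f.map_one]
  · rw [← Matrix.map_mul, hNM, Matrix.map_one f f.map_zero f.map_one]

theorem isLeftRegular_of_trailingCoeff {R : Type*} [Ring R] {p : Polynomial R}
    (hp : IsLeftRegular p.trailingCoeff) : IsLeftRegular p := by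
  rw [isLeftRegular_iff_right_eq_zero_of_mul] at hp ⊢
  intro q hpq
  refine Polynomial.trailingCoeff_eq_zero.1 (hp _ ?_)
  rw [← Polynomial.coeff_mul_natTrailingDegree_add_natTrailingDegree, hpq, Polynomial.coeff_zero]

theorem exists_mulSemiringAction {K S : Type*} [CommSemiring K] [Semiring S] [Algebra K S]
    (σ : S ≃ₐ[K] S) :
    ∃ (_ : MulSemiringAction (Multiplicative ℤ) S) (_ : SMulCommClass (Multiplicative ℤ) K S),
      ∀ x, Multiplicative.ofAdd (1 : ℤ) • x = σ x := by
  let _ : MulSemiringAction (Multiplicative ℤ) S := .compHom _ (zpowersHom _ σ)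
  have smul_def (g : Multiplicative ℤ) (x : S) : g • x = zpowersHom _ σ g x := rfl
  exact ⟨_, ⟨fun g c x => by rw [smul_def, smul_def, map_smul]⟩, fun x => by simp [smul_def]⟩

section SkewMonoidAlgebra

open SkewMonoidAlgebra

variable {S G : Type*}

theorem coeff_mul_of_uniqueMul [Semiring S] [Mul G] [SMulZeroClass G S]
    {x y : SkewMonoidAlgebra S G} {a b : G} (h : UniqueMul x.support y.support a b) :
    (x * y).coeff (a * b) = x.coeff a * a • y.coeff b := by
  classical
  rw [coeff_mul_antidiagonal_finsum, finsum_eq_single _ (a, b), finsum_eq_if]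
  · exact if_pos rfl
  intro c hc
  rw [finsum_eq_if, ite_eq_right_iff]
  intro hmul
  by_contra hne
  have hx := left_ne_zero_of_mul hne
  have hy : y.coeff c.2 ≠ 0 := fun h0 => right_ne_zero_of_mul hne (by rw [h0, smul_zero])
  exact hc (Prod.ext_iff.2 (h (mem_support_iff.2 hx) (mem_support_iff.2 hy) hmul))

theorem exists_eq_single_of_mul_eq_single [Semiring S] [NoZeroDivisors S] [Group G]
    [TwoUniqueProds G] [MulSemiringAction G S] {x y : SkewMonoidAlgebra S G} {g : G} {s : S}
    (hs : s ≠ 0) (hxy : x * y = single g s) : ∃ k c, x = single k c := by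
  classical
  have coeff_ne_zero {a b : G} (ha : a ∈ x.support) (hb : b ∈ y.support)
      (h : UniqueMul x.support y.support a b) : (x * y).coeff (a * b) ≠ 0 := by
    rw [coeff_mul_of_uniqueMul h]
    exact mul_ne_zero (mem_support_iff.1 ha) ((smul_ne_zero_iff_ne a).2 (mem_support_iff.1 hb))
  have prod_eq {a b : G} (ha : a ∈ x.support) (hb : b ∈ y.support)
      (h : UniqueMul x.support y.support a b) : a * b = g := by
    by_contra hne
    exact coeff_ne_zero ha hb h (by rw [hxy, coeff_single_apply, if_neg (Ne.symm hne)])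
  have hxy0 : x * y ≠ 0 := by rwa [hxy, Ne, single_eq_zero]
  have hx : 0 < x.support.card := by
    rw [Finset.card_pos, Finset.nonempty_iff_ne_empty, Ne, support_eq_empty]
    exact left_ne_zero_of_mul hxy0
  have hy : 0 < y.support.card := by
    rw [Finset.card_pos, Finset.nonempty_iff_ne_empty, Ne, support_eq_empty]
    exact right_ne_zero_of_mul hxy0
  have card_le : x.support.card * y.support.card ≤ 1 := by
    by_contra! hcard
    obtain ⟨p, hp, q, hq, hne, hpu, hqu⟩ := TwoUniqueProds.uniqueMul_of_one_lt_card hcard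
    rw [Finset.mem_product] at hp hq
    have hpq := (prod_eq hq.1 hq.2 hqu).trans (prod_eq hp.1 hp.2 hpu).symm
    exact hne.symm (Prod.ext_iff.2 (hpu hq.1 hq.2 hpq))
  obtain ⟨k, hk⟩ := Finset.card_eq_one.1
    (Nat.eq_one_of_mul_eq_one_right (card_le.antisymm (Nat.mul_pos hx hy)))
  refine ⟨k, x.coeff k, ?_⟩
  conv_lhs => rw [← sum_single x, sum_def', hk, Finset.sum_singleton]

theorem dvd_of_one_add_single_mul_eq [CommRing S] [Group G] [MulSemiringAction G S] {t k : G}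
    {s c : S} {x : SkewMonoidAlgebra S G} (ht : t ≠ 1)
    (h : (1 + single t 1) * single k c = single 1 (t • s) * x) : s ∣ c := by
  classical
  have coeff_eq := congrArg (fun y => t⁻¹ • y.coeff (t * k)) h
  have hne : k ≠ t * k := by simpa using ht
  simp only [add_mul, one_mul, single_mul_single, coeff_single_one_mul, coeff_add,
    Finsupp.add_apply, coeff_single_apply, hne, if_false, if_true, zero_add, smul_mul',
    inv_smul_smul] at coeff_eq
  exact ⟨_, coeff_eq⟩

theorem one_add_mul_add_mul_sub_eq_one {A : Type*} [Ring A] [CommRing S] (ι : S →+* A) {d : A}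
    {s s' p q : S} (comm : d * ι s = ι s' * d) (h : p * s + q * s' = 1) :
    (1 + d) * ι (s * p) + ι s' * (ι q - d * ι p) = 1 :=
  calc (1 + d) * ι (s * p) + ι s' * (ι q - d * ι p)
    _ = ι (s * p) + ι (s' * q) + (d * ι s * ι p - ι s' * d * ι p) := by
      simp only [map_mul, add_mul, one_mul, mul_sub, mul_assoc]
      abel
    _ = ι (p * s + q * s') := by rw [comm, sub_self, add_zero, ← map_add, mul_comm s, mul_comm s']
    _ = 1 := by rw [h, map_one]

theorem not_free_colonIdeal {A : Type*} [Ring A] [InvariantBasisNumber A]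
    [CommRing S] [IsDomain S] [Group G] [TwoUniqueProds G] [MulSemiringAction G S] (ι : S →+* A)
    (ρ : A →+* SkewMonoidAlgebra S G) (hρι : ∀ x, ρ (ι x) = single 1 x) {d : A} {t : G}
    (hρd : ρ d = single t 1) (ht : t ≠ 1) (hd : IsLeftRegular (1 + d)) {s : S}
    (comm : d * ι s = ι (t • s) * d) (hs : ¬IsUnit s) (hcop : IsCoprime s (t • s)) :
    ¬Module.Free Aᵐᵒᵖ (colonIdeal (1 + d) (ι (t • s))) := by
  intro hfree
  obtain ⟨p, q, hpq⟩ := hcop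
  have unimodular := one_add_mul_add_mul_sub_eq_one ι comm hpq
  obtain ⟨g, y, hgy, syzygy⟩ := exists_generator_of_free_colonIdeal hd unimodular
  obtain ⟨x₁, -, hx₁⟩ := syzygy (ι s + d * ι (t • s)) (ι (s * t • s)) <| by
    rw [mul_add, add_mul, one_mul, map_mul, ← mul_assoc, ← mul_assoc, comm, ← map_mul, ← map_mul,
      mul_comm]
  obtain ⟨x₂, -, hx₂⟩ := syzygy ((ι q - d * ι p) * (1 + d)) (1 - ι (s * p) * (1 + d)) <| by
    rw [← mul_assoc, eq_sub_of_add_eq' unimodular, sub_mul, mul_sub, one_mul, mul_one, mul_assoc]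
  have hs0 : s ≠ 0 := by
    rintro rfl
    simp at hpq
  obtain ⟨k, c, hy⟩ : ∃ k c, ρ y = single k c := by
    apply exists_eq_single_of_mul_eq_single (y := ρ x₁) (g := 1) (s := s * t • s)
    · exact mul_ne_zero hs0 ((smul_ne_zero_iff_ne t).2 hs0)
    · rw [← map_mul, ← hx₁, hρι]
  have s_dvd_c : s ∣ c := by
    refine dvd_of_one_add_single_mul_eq (k := k) (x := ρ g) ht ?_
    rw [← hy, ← hρd, ← hρι, ← map_one ρ, ← map_add, ← map_mul, ← map_mul, hgy]
  have coeff_one : 1 - s * p = c * k • (ρ x₂).coeff k⁻¹ := by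
    classical
    have hρ : 1 - (single 1 (s * p) + single t (s * p)) = single k c * ρ x₂ := by
      rw [← hy, ← map_mul ρ, ← hx₂, map_sub, map_mul, map_add, map_one, hρι, hρd, mul_add, mul_one,
        single_mul_single, one_mul, one_smul, mul_one]
    simpa [coeff_single_apply, ht] using congrArg (coeff · 1) hρ
  refine hs (isUnit_of_dvd_one ?_)
  rw [← sub_add_cancel 1 (s * p), coeff_one]
  exact dvd_add (s_dvd_c.mul_right _) (dvd_mul_right s p)

end SkewMonoidAlgebra

section aevalOfCommute

open scoped IsMulCommutative

variable {R A ι : Type*} [CommSemiring R] [Semiring A] [Algebra R A] {x : ι → A}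

/-- Evaluation of commutative polynomials at pairwise commuting elements of a noncommutative
algebra, through the commutative subalgebra they generate. -/
def aevalOfCommute (hx : ∀ i j, Commute (x i) (x j)) : MvPolynomial ι R →ₐ[R] A :=
  have := Algebra.isMulCommutative_adjoin R (s := Set.range x) <| by
    rintro _ ⟨i, rfl⟩ _ ⟨j, rfl⟩
    exact hx i j
  (Algebra.adjoin R (Set.range x)).val.comp
    (MvPolynomial.aeval fun i => ⟨x i, Algebra.subset_adjoin ⟨i, rfl⟩⟩)

theorem aevalOfCommute_X (hx : ∀ i j, Commute (x i) (x j)) (i : ι) :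
    aevalOfCommute (R := R) hx (.X i) = x i := by
  simp [aevalOfCommute]

end aevalOfCommute

namespace DownUp

variable {K : Type} [Field K] {α β γ : K}

local notation "𝐃" => D K α β γ
local notation "𝐔" => U K α β γ

theorem D_mul_U_mul_U : 𝐃 * 𝐔 * 𝐔 = α • (𝐔 * 𝐃 * 𝐔) + β • (𝐔 * 𝐔 * 𝐃) + γ • 𝐔 := by
  simpa [D, U] using RingQuot.mkAlgHom_rel K (DownUpRel.rel1 (a := α) (b := β) (g := γ))

theorem D_mul_D_mul_U : 𝐃 * 𝐃 * 𝐔 = α • (𝐃 * 𝐔 * 𝐃) + β • (𝐔 * 𝐃 * 𝐃) + γ • 𝐃 := by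
  simpa [D, U] using RingQuot.mkAlgHom_rel K (DownUpRel.rel2 (a := α) (b := β) (g := γ))

section lift

variable {B : Type*} [Ring B] [Algebra K B]

/-- The homomorphism out of `A(α,β,γ)` given by the images of `D` and `U`. -/
def lift (d u : B) (h₁ : d * u * u = α • (u * d * u) + β • (u * u * d) + γ • u)
    (h₂ : d * d * u = α • (d * u * d) + β • (u * d * d) + γ • d) : DownUp K α β γ →ₐ[K] B :=
  RingQuot.liftAlgHom K ⟨FreeAlgebra.lift K ![d, u], by
    rintro x y (_ | _)
    · simpa using h₁
    · simpa using h₂⟩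

variable {d u : B} (h₁ : d * u * u = α • (u * d * u) + β • (u * u * d) + γ • u)
  (h₂ : d * d * u = α • (d * u * d) + β • (u * d * d) + γ • d)

@[simp]
theorem lift_D : lift d u h₁ h₂ 𝐃 = d := by
  simp [lift, D]

@[simp]
theorem lift_U : lift d u h₁ h₂ 𝐔 = u := by
  simp [lift, U]

theorem algHom_ext {φ ψ : DownUp K α β γ →ₐ[K] B} (hD : φ 𝐃 = ψ 𝐃) (hU : φ 𝐔 = ψ 𝐔) :
    φ = ψ := by
  refine RingQuot.ringQuot_ext' _ _ _ (FreeAlgebra.hom_ext (funext fun i => ?_))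
  fin_cases i
  · exact hD
  · exact hU

end lift

instance : InvariantBasisNumber (DownUp K α β γ) :=
  invariantBasisNumber_of_ringHom (lift (0 : K) 0 (by simp) (by simp)).toRingHom

theorem commute_U_mul_D_D_mul_U : Commute (𝐔 * 𝐃) (𝐃 * 𝐔) := by
  calc 𝐔 * 𝐃 * (𝐃 * 𝐔)
    _ = 𝐔 * (𝐃 * 𝐃 * 𝐔) := by simp only [mul_assoc]
    _ = 𝐃 * 𝐔 * 𝐔 * 𝐃 := by
      rw [D_mul_D_mul_U, D_mul_U_mul_U]
      simp only [mul_add, add_mul, mul_smul_comm, smul_mul_assoc, mul_assoc]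
    _ = 𝐃 * 𝐔 * (𝐔 * 𝐃) := mul_assoc _ _ _

variable (K α β γ) in
/-- The homomorphism `K[X₀, X₁] → A(α,β,γ)` sending `X₀` to `UD` and `X₁` to `DU`. -/
def baseHom : MvPolynomial (Fin 2) K →ₐ[K] DownUp K α β γ :=
  aevalOfCommute (x := ![𝐔 * 𝐃, 𝐃 * 𝐔]) <| by
    have h := commute_U_mul_D_D_mul_U (α := α) (β := β) (γ := γ)
    simp [Fin.forall_fin_two, h, h.symm]

@[simp]
theorem baseHom_X_zero : baseHom K α β γ (.X 0) = 𝐔 * 𝐃 :=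
  aevalOfCommute_X _ 0

@[simp]
theorem baseHom_X_one : baseHom K α β γ (.X 1) = 𝐃 * 𝐔 :=
  aevalOfCommute_X _ 1

open MvPolynomial in
/-- The automorphism `σ` of `K[X₀, X₁]` for which `D * baseHom f = baseHom (σ f) * D`. -/
def shift (hβ : β ≠ 0) (α γ : K) : MvPolynomial (Fin 2) K ≃ₐ[K] MvPolynomial (Fin 2) K :=
  .ofAlgHom (aeval ![X 1, α • X 1 + β • X 0 + C γ])
    (aeval ![β⁻¹ • (X 1 - α • X 0 - C γ), X 0])
    (by ext i : 1; fin_cases i <;> simp [smul_smul, hβ, algebraMap_eq, add_sub_right_comm])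
    (by ext i : 1; fin_cases i <;> simp [smul_smul, hβ, algebraMap_eq, add_sub_left_comm])

open MvPolynomial in
@[simp]
theorem shift_X_zero (hβ : β ≠ 0) : shift hβ α γ (X 0) = X 1 := by
  simp [shift]

open MvPolynomial in
@[simp]
theorem shift_X_one (hβ : β ≠ 0) : shift hβ α γ (X 1) = α • X 1 + β • X 0 + C γ := by
  simp [shift]

theorem D_mul_baseHom (hβ : β ≠ 0) (f : MvPolynomial (Fin 2) K) :
    𝐃 * baseHom K α β γ f = baseHom K α β γ (shift hβ α γ f) * 𝐃 := by
  induction f using MvPolynomial.induction_on with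
  | C c =>
    rw [← MvPolynomial.algebraMap_eq, AlgEquiv.commutes, AlgHom.commutes, Algebra.commutes]
  | add f g hf hg => rw [map_add, mul_add, hf, hg, map_add, map_add, add_mul]
  | mul_X f i hf =>
    have hX : 𝐃 * baseHom K α β γ (.X i) = baseHom K α β γ (shift hβ α γ (.X i)) * 𝐃 := by
      fin_cases i
      · simp [mul_assoc]
      · simp [← mul_assoc, D_mul_D_mul_U, add_mul, ← MvPolynomial.algebraMap_eq,
          ← Algebra.smul_def]
    rw [map_mul, ← mul_assoc, hf, mul_assoc, hX, ← mul_assoc, map_mul, map_mul]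

section skewRep

open SkewMonoidAlgebra

variable {S G : Type*} [CommRing S] [Algebra K S] [Group G] [MulSemiringAction G S]
  [SMulCommClass G K S]

variable (t : G) (u : S) (h : t • t • u = α • t • u + β • u + algebraMap K S γ)

/-- The homomorphism of `A(α,β,γ)` to the skew group algebra of `G`
over `S` that sends `D` to `t` and `U` to `u * t⁻¹`. -/
def skewRep : DownUp K α β γ →ₐ[K] SkewMonoidAlgebra S G :=
  lift (single t 1) (single t⁻¹ u)
    (by
      have h' : t • u = α • u + β • t⁻¹ • u + algebraMap K S γ := by
        simpa [smul_comm t⁻¹ α, smul_comm t⁻¹ β, smul_algebraMap] using congrArg (t⁻¹ • ·) h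
      have hcancel : t⁻¹ * t⁻¹ * t = t⁻¹ := by group
      simp only [single_mul_single, smul_single, ← single_add, mul_inv_cancel, inv_mul_cancel,
        one_mul, hcancel, one_smul, smul_one, mul_one]
      rw [h', add_mul, add_mul, smul_mul_assoc, smul_mul_assoc, mul_comm (t⁻¹ • u),
        Algebra.smul_def γ])
    (by
      have hcancel : t * t * t⁻¹ = t := by group
      simp only [single_mul_single, smul_single, ← single_add, mul_inv_cancel, inv_mul_cancel,
        one_mul, hcancel, mul_smul, smul_one, mul_one, h, Algebra.algebraMap_eq_smul_one])

@[simp]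
theorem skewRep_D : skewRep t u h 𝐃 = single t 1 :=
  lift_D _ _

@[simp]
theorem skewRep_U : skewRep t u h 𝐔 = single t⁻¹ u :=
  lift_U _ _

theorem skewRep_baseHom (f : MvPolynomial (Fin 2) K) :
    skewRep t u h (baseHom K α β γ f) = single 1 (MvPolynomial.aeval ![u, t • u] f) := by
  induction f using MvPolynomial.induction_on with
  | C c =>
    simp [← MvPolynomial.algebraMap_eq, SkewMonoidAlgebra.coe_algebraMap]
  | add f g hf hg => simp only [map_add, hf, hg, single_add]
  | mul_X f i hf =>
    fin_cases i <;> simp [hf, single_mul_single]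

end skewRep

section grading

open Polynomial

/-- The homomorphism `A(α,β,0) → A(α,β,0)[X]` encoding the grading in which `D` and
`U` have degree one. -/
def gradingHom (K : Type) [Field K] (α β : K) : DownUp K α β 0 →ₐ[K] (DownUp K α β 0)[X] :=
  have mul_mul_eq (a b c : DownUp K α β 0) :
      C a * X * (C b * X) * (C c * X) = C (a * b * c) * X ^ 3 := by
    simp only [C_mul_X_eq_monomial, C_mul_X_pow_eq_monomial, monomial_mul_monomial]
  lift (C (D K α β 0) * X) (C (U K α β 0) * X)
    (by simp [mul_mul_eq, D_mul_U_mul_U, add_mul, ← smul_C])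
    (by simp [mul_mul_eq, D_mul_D_mul_U, add_mul, ← smul_C])

theorem gradingHom_injective : Function.Injective (gradingHom K α β) := by
  let evalOne : (DownUp K α β 0)[X] →ₐ[K] DownUp K α β 0 :=
    .mk' (eval₂RingHom' (.id _) 1 fun _ => .one_right _) fun c p => by simp [eval₂RingHom']
  have h : evalOne.comp (gradingHom K α β) = .id K _ := by
    apply algHom_ext <;> simp [evalOne, gradingHom, eval₂RingHom']
  exact Function.LeftInverse.injective (DFunLike.congr_fun h)

theorem isLeftRegular_one_add_D : IsLeftRegular (1 + D K α β 0) := by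
  have := nontrivial_of_invariantBasisNumber (DownUp K α β 0)
  have coeff_zero_eq : (gradingHom K α β (1 + D K α β 0)).coeff 0 = 1 := by simp [gradingHom]
  have regular : IsLeftRegular (gradingHom K α β (1 + D K α β 0)) := by
    refine isLeftRegular_of_trailingCoeff ?_
    rw [trailingCoeff_eq_coeff_zero (by rw [coeff_zero_eq]; exact one_ne_zero), coeff_zero_eq]
    exact isRegular_one.left
  exact fun x y hxy =>
    gradingHom_injective (regular (by simpa using congrArg (gradingHom K α β) hxy))

end grading

section comaximal

open MvPolynomial

variable {lam μ : K}

theorem exists_not_isUnit_isCoprime_shift_of_ne_one (hβ : β ≠ 0) (hsum : lam + μ = α)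
    (hprod : lam * μ = -β) (hlam : lam ≠ 1) : ∃ f, ¬IsUnit f ∧ IsCoprime f (shift hβ α 0 f) := by
  set ω : MvPolynomial (Fin 2) K := X 1 - C μ * X 0
  have shift_ω : shift hβ α 0 ω = C lam * ω := by
    obtain rfl : β = -(lam * μ) := by rw [hprod, neg_neg]
    simp only [ω, map_add, map_sub, map_mul, map_neg, shift_X_zero, shift_X_one, smul_eq_C_mul,
      ← hsum, map_zero, ← algebraMap_eq, AlgEquiv.commutes]
    ring
  refine ⟨1 + ω, fun h => ?_, C (lam - 1)⁻¹ * C lam, -C (lam - 1)⁻¹, ?_⟩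
  · simpa [ω] using h.map (eval ![0, -1])
  · rw [map_add, map_one, shift_ω]
    calc C (lam - 1)⁻¹ * C lam * (1 + ω) + -C (lam - 1)⁻¹ * (1 + C lam * ω)
      _ = C ((lam - 1)⁻¹ * (lam - 1)) := by
        rw [C_mul, C_sub, C_1]
        ring
      _ = 1 := by rw [inv_mul_cancel₀ (sub_ne_zero.2 hlam), C_1]

theorem exists_not_isUnit_isCoprime_shift (hβ : β ≠ 0) (hsum : lam + μ = α)
    (hprod : lam * μ = -β) : ∃ f, ¬IsUnit f ∧ IsCoprime f (shift hβ α 0 f) := by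
  by_cases hlam : lam = 1
  · by_cases hμ : μ = 1
    · obtain rfl : α = 1 + 1 := by rw [← hsum, hlam, hμ]
      obtain rfl : β = -1 := by rw [← neg_eq_iff_eq_neg, ← hprod, hlam, hμ, one_mul]
      set ω : MvPolynomial (Fin 2) K := X 1 - X 0
      refine ⟨1 + ω * X 0, fun h => ?_, 1 - ω * X 0 - X 0 ^ 2, X 0 ^ 2, ?_⟩
      · simpa [ω] using h.map (eval ![1, 0])
      · simp only [ω, map_add, map_sub, map_mul, map_one, shift_X_zero, shift_X_one, add_smul,
          neg_smul, one_smul, C_0]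
        ring
    · exact exists_not_isUnit_isCoprime_shift_of_ne_one hβ ((add_comm _ _).trans hsum)
        ((mul_comm _ _).trans hprod) hμ
  · exact exists_not_isUnit_isCoprime_shift_of_ne_one hβ hsum hprod hlam

end comaximal

end DownUp

open DownUp MvPolynomial in
theorem downUp_gamma_zero_has_nontrivial_stablyFree_right_ideal_general
    (K : Type) [Field K] (α β lam μ : K) (hβ : β ≠ 0)
    (hsum : lam + μ = α) (hprod : lam * μ = -β) :
    ∃ I : Submodule (DownUp K α β 0)ᵐᵒᵖ (DownUp K α β 0),
      IsStablyFreeRight (DownUp K α β 0) I ∧ ¬ Module.Free (DownUp K α β 0)ᵐᵒᵖ I := by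
  obtain ⟨_, _, smul_eq⟩ := exists_mulSemiringAction (shift hβ α 0)
  set t := Multiplicative.ofAdd (1 : ℤ)
  obtain ⟨f, hf, hcop⟩ := exists_not_isUnit_isCoprime_shift hβ hsum hprod
  rw [← smul_eq] at hcop
  have comm : D K α β 0 * baseHom K α β 0 f = baseHom K α β 0 (t • f) * D K α β 0 := by
    rw [smul_eq, D_mul_baseHom]
  have hX : t • t • (X 0 : MvPolynomial (Fin 2) K) =
      α • t • X 0 + β • X 0 + algebraMap K _ 0 := by
    simp [smul_eq, algebraMap_eq]
  have skewRep_baseHom' (x) : skewRep t (X 0) hX (baseHom K α β 0 x) = .single 1 x := by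
    have hvars : ![X 0, t • X 0] = (X : Fin 2 → MvPolynomial (Fin 2) K) := by
      ext1 i
      fin_cases i <;> simp [smul_eq]
    rw [skewRep_baseHom, hvars, aeval_X_left_apply]
  refine ⟨colonIdeal (1 + D K α β 0) (baseHom K α β 0 (t • f)), ?_,
    not_free_colonIdeal (baseHom K α β 0).toRingHom (skewRep t (X 0) hX).toRingHom
      skewRep_baseHom' (skewRep_D t (X 0) hX) (by decide) isLeftRegular_one_add_D comm hf hcop⟩
  obtain ⟨p, q, hpq⟩ := hcop
  exact isStablyFreeRight_colonIdeal isLeftRegular_one_add_D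
    (one_add_mul_add_mul_sub_eq_one (baseHom K α β 0).toRingHom comm hpq)

/-- For `char K = 0`, `β ≠ 0` and both roots `λ, μ` of `t² − αt − β` in `K`,
the down-up algebra `A = A(α,β,0)` has a right ideal that is stably free but not free as a
right `A`-module. -/
theorem downUp_gamma_zero_has_nontrivial_stablyFree_right_ideal
    (K : Type) [Field K] [CharZero K] (α β lam μ : K) (hβ : β ≠ 0)
    (hsum : lam + μ = α) (hprod : lam * μ = -β) :
    ∃ I : Submodule (DownUp K α β 0)ᵐᵒᵖ (DownUp K α β 0),
      IsStablyFreeRight (DownUp K α β 0) I ∧ ¬ Module.Free (DownUp K α β 0)ᵐᵒᵖ I :=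
  downUp_gamma_zero_has_nontrivial_stablyFree_right_ideal_general K α β lam μ hβ hsum hprod
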